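/- arXiv:1812.00266 — 16 statements merged into one kernel-verified Lean document; each statement's English description precedes it below -/
import Mathlib

section
/- Let a < t be real numbers and let f : ℝ → ℝ be continuously differentiable on [a, t]. Then the left-sided Caputo–Fabrizio fractional derivative of f tends to the ordinary derivative as the order tends to 1 from the left: lim_{α → 1⁻} (1/(1−α)) ∫_a^t f′(τ) · exp((α/(α−1))·(t−τ)) dτ = f′(t). -/
open MeasureTheory intervalIntegral Real Set Filter

theorem cf_aux_zero (d : ℝ) (hd : 0 < d) :
    Tendsto (fun α : ℝ => (1 / (1 - α)) * Real.exp ((α / (α - 1)) * d))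
      (nhdsWithin 1 (Set.Iio 1)) (nhds 0) := by
  have hk : Tendsto (fun α : ℝ => (1 - α)⁻¹) (nhdsWithin 1 (Set.Iio 1)) atTop := by
    apply Tendsto.inv_tendsto_nhdsGT_zero
    refine tendsto_nhdsWithin_iff.2 ⟨?_, ?_⟩
    · have : Tendsto (fun α : ℝ => 1 - α) (nhds 1) (nhds (1 - 1)) :=
        (continuous_const.sub continuous_id).tendsto 1
      rw [sub_self] at this
      exact this.mono_left nhdsWithin_le_nhds
    · filter_upwards [self_mem_nhdsWithin] with α hα
      simpa using hα
  have h1 : Tendsto (fun k : ℝ => Real.exp d * (k ^ (1 : ℝ) * Real.exp (-d * k))) atTop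
      (nhds (Real.exp d * 0)) :=
    (tendsto_rpow_mul_exp_neg_mul_atTop_nhds_zero 1 d hd).const_mul _
  rw [mul_zero] at h1
  refine (h1.comp hk).congr' ?_
  filter_upwards [self_mem_nhdsWithin] with α hα
  have hα' : α < 1 := hα
  have h2 : 1 - α ≠ 0 := by linarith
  have h3 : α - 1 ≠ 0 := by linarith
  have h4 : (α / (α - 1)) * d = d + -d * (1 - α)⁻¹ := by
    have : α / (α - 1) = 1 - (1 - α)⁻¹ := by
      rw [← neg_sub 1 α]
      field_simp
      ring
    rw [this]; ring
  simp only [Function.comp, Real.rpow_one]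
  rw [h4, Real.exp_add]
  ring

/-- As the order `α` tends to `1` from the left, the left-sided Caputo–Fabrizio
fractional derivative of a `C¹` function `f` on `[a, t]` tends to the ordinary
derivative `f'(t)`. -/
theorem cf_deriv_tendsto_deriv (a t : ℝ) (hat : a < t) (f : ℝ → ℝ)
    (hf : ContDiffOn ℝ 1 f (Set.Icc a t)) :
    Tendsto
      (fun α : ℝ => (1 / (1 - α)) *
        ∫ τ in a..t, derivWithin f (Set.Icc a t) τ * Real.exp ((α / (α - 1)) * (t - τ)))
      (nhdsWithin 1 (Set.Iio 1))
      (nhds (derivWithin f (Set.Icc a t) t)) := by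
  have hc : ContinuousOn (derivWithin f (Set.Icc a t)) (Set.Icc a t) :=
    hf.continuousOn_derivWithin (uniqueDiffOn_Icc hat) le_rfl
  have hpos : ∀ᶠ α : ℝ in nhdsWithin 1 (Set.Iio 1), 0 < α ∧ α < 1 := by
    filter_upwards [self_mem_nhdsWithin, nhdsWithin_le_nhds (lt_mem_nhds zero_lt_one)] with α h1 h2
    exact ⟨h2, h1⟩
  have key := tendsto_setIntegral_peak_smul_of_integrableOn_of_tendsto (μ := volume)
    (s := Set.Ioc a t) (t := Set.Ioc a t) (x₀ := t)
    (l := nhdsWithin (1 : ℝ) (Set.Iio 1))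
    (φ := fun α τ => (1 / (1 - α)) * Real.exp ((α / (α - 1)) * (t - τ)))
    (g := derivWithin f (Set.Icc a t)) (a := derivWithin f (Set.Icc a t) t)
    measurableSet_Ioc measurableSet_Ioc subset_rfl self_mem_nhdsWithin (by simp)
    ?_ ?_ ?_ ?_ ?_ ?_
  · refine key.congr fun α => ?_
    rw [intervalIntegral.integral_of_le hat.le, ← MeasureTheory.integral_const_mul]
    congr 1
    ext τ
    simp only [smul_eq_mul]
    ring
  · filter_upwards [hpos] with α hα x _
    have : 0 < 1 - α := by linarith [hα.2]
    positivity
  · intro u hu htu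
    obtain ⟨ε, hε, hb⟩ := Metric.isOpen_iff.1 hu t htu
    rw [Metric.tendstoUniformlyOn_iff]
    intro δ hδ
    filter_upwards [hpos, (cf_aux_zero ε hε).eventually (gt_mem_nhds hδ)] with α hα hlt x hx
    have h1 : 0 < 1 - α := by linarith [hα.2]
    have hx2 : ε ≤ t - x := by
      by_contra hcon
      push Not at hcon
      apply hx.2
      apply hb
      rw [Metric.mem_ball, Real.dist_eq, abs_lt]
      constructor <;> linarith [hx.1.2]
    have hneg : α / (α - 1) ≤ 0 := div_nonpos_of_nonneg_of_nonpos hα.1.le (by linarith)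
    have hnn : 0 ≤ (1 / (1 - α)) * Real.exp ((α / (α - 1)) * (t - x)) := by positivity
    rw [Pi.zero_apply, dist_zero_left, Real.norm_of_nonneg hnn]
    refine lt_of_le_of_lt ?_ hlt
    apply mul_le_mul_of_nonneg_left _ (by positivity)
    exact Real.exp_le_exp.2 (mul_le_mul_of_nonpos_left hx2 hneg)
  · have hlim : Tendsto (fun α : ℝ => 1 / α - ((1 - α) / α) *
        ((1 / (1 - α)) * Real.exp ((α / (α - 1)) * (t - a))))
        (nhdsWithin 1 (Set.Iio 1)) (nhds (1 / 1 - ((1 - 1) / 1) * 0)) := by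
      have e1 : Tendsto (fun α : ℝ => α) (nhdsWithin 1 (Set.Iio 1)) (nhds 1) :=
        nhdsWithin_le_nhds
      exact (tendsto_const_nhds.div e1 one_ne_zero).sub
        (((tendsto_const_nhds.sub e1).div e1 one_ne_zero).mul
          (cf_aux_zero (t - a) (sub_pos.2 hat)))
    have : (1 / 1 - ((1 - 1) / 1) * 0 : ℝ) = 1 := by norm_num
    rw [this] at hlim
    refine hlim.congr' ?_
    filter_upwards [hpos] with α hα
    have h0 : α ≠ 0 := hα.1.ne'
    have h1 : 1 - α ≠ 0 := by linarith [hα.2]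
    have h2 : α - 1 ≠ 0 := by linarith [hα.2]
    rw [← intervalIntegral.integral_of_le hat.le]
    rw [intervalIntegral.integral_eq_sub_of_hasDerivAt
      (f := fun τ => (1 / α) * Real.exp ((α / (α - 1)) * (t - τ)))]
    · simp only [sub_self, mul_zero, Real.exp_zero]
      field_simp
    · intro x _
      have hd := ((((hasDerivAt_id x).const_sub t).const_mul (α / (α - 1))).exp).const_mul (1 / α)
      refine hd.congr_deriv ?_
      have : 1 / (1 - α) = (1 / α) * (α / (α - 1) * -1) := by
        rw [← neg_sub 1 α]
        field_simp
      rw [this]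
      simp only [id]
      ring
    · apply Continuous.intervalIntegrable
      fun_prop
  · refine Eventually.of_forall fun α => ?_
    apply Continuous.aestronglyMeasurable
    fun_prop
  · exact (hc.integrableOn_Icc).mono_set Ioc_subset_Icc_self
  · exact (hc t (right_mem_Icc.2 hat.le)).mono_left (nhdsWithin_mono _ Ioc_subset_Icc_self)
end

section
/- Let α ∈ (0,1) and let f : [0,∞) → ℝ be continuously differentiable with both f and f′ bounded on [0,∞). Then for every real z > 0, the Laplace transform of the Caputo–Fabrizio fractional derivative of f satisfies ∫_0^∞ e^{−zt} · [(1/(1−α)) ∫_0^t f′(τ) · exp((α/(α−1))·(t−τ)) dτ] dt = (z·F(z) − f(0)) / ((1−α)z + α), where F(z) = ∫_0^∞ e^{−zt} f(t) dt. -/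
open MeasureTheory intervalIntegral Real Set Filter

/-- Laplace transform of the Caputo–Fabrizio fractional derivative:
for `α ∈ (0,1)`, a `C¹` function `f` on `[0,∞)` with `f` and `f'` bounded, and `z > 0`,
`ℒ{CF Δ^(α) f}(z) = (z F(z) - f 0) / ((1-α) z + α)` where `F` is the Laplace transform of `f`. -/
theorem laplace_cf_deriv (α : ℝ) (hα : α ∈ Set.Ioo (0 : ℝ) 1) (f : ℝ → ℝ)
    (hf : ContDiffOn ℝ 1 f (Set.Ici 0))
    (hfb : ∃ M : ℝ, ∀ t : ℝ, 0 ≤ t → |f t| ≤ M)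
    (hfb' : ∃ M : ℝ, ∀ t : ℝ, 0 ≤ t → |derivWithin f (Set.Ici 0) t| ≤ M)
    (z : ℝ) (hz : 0 < z) :
    ∫ t in Set.Ioi (0 : ℝ), Real.exp (-z * t) *
        ((1 / (1 - α)) *
          ∫ τ in (0 : ℝ)..t, derivWithin f (Set.Ici 0) τ * Real.exp ((α / (α - 1)) * (t - τ)))
      = (z * (∫ t in Set.Ioi (0 : ℝ), Real.exp (-z * t) * f t) - f 0) / ((1 - α) * z + α) := by
  obtain ⟨M, hM⟩ := hfb
  obtain ⟨M', hM'⟩ := hfb'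
  obtain ⟨h0, h1⟩ := hα
  have hc : α / (α - 1) < 0 := div_neg_of_pos_of_neg h0 (by linarith)
  have h1' : α - 1 ≠ 0 := by linarith
  have h1'' : 1 - α ≠ 0 := by linarith
  have hDcont : ContinuousOn (derivWithin f (Ici 0)) (Ici 0) :=
    hf.continuousOn_derivWithin (uniqueDiffOn_Ici 0) le_rfl
  have hexp : IntegrableOn (fun t : ℝ => Real.exp (-z * t)) (Ioi 0) :=
    integrableOn_exp_mul_Ioi (by linarith) 0
  have key : ∀ (g : ℝ → ℝ) (K : ℝ), ContinuousOn g (Ici 0) → (∀ t, 0 ≤ t → |g t| ≤ K) →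
      IntegrableOn (fun t : ℝ => Real.exp (-z * t) * g t) (Ioi 0) := by
    intro g K hg hK
    refine Integrable.mul_bdd (c := K) hexp
      ((hg.mono Ioi_subset_Ici_self).aestronglyMeasurable measurableSet_Ioi) ?_
    filter_upwards [ae_restrict_mem measurableSet_Ioi] with t ht
    exact hK t (le_of_lt ht)
  have hfi := key f M hf.continuousOn hM
  have hDi := key _ M' hDcont hM'
  have hparts : ∫ t in Ioi (0 : ℝ), (Real.exp (-z * t) * derivWithin f (Ici 0) t
      - z * (Real.exp (-z * t) * f t)) = 0 - Real.exp (-z * 0) * f 0 := by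
    refine integral_Ioi_of_hasDerivAt_of_tendsto
      (f := fun t => Real.exp (-z * t) * f t) ?_ ?_ (hDi.sub (hfi.const_mul z)) ?_
    · exact (by fun_prop : Continuous fun t : ℝ => Real.exp (-z * t)).continuousWithinAt.mul
        (hf.continuousOn 0 self_mem_Ici)
    · intro x hx
      have hd : HasDerivAt f (derivWithin f (Ici 0) x) x :=
        ((hf.differentiableOn one_ne_zero x (Ioi_subset_Ici_self hx)).hasDerivWithinAt).hasDerivAt
          (Ici_mem_nhds hx)
      have he : HasDerivAt (fun t : ℝ => Real.exp (-z * t)) (Real.exp (-z * x) * (-z * 1)) x :=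
        ((hasDerivAt_id x).const_mul (-z)).exp
      refine (he.mul hd).congr_deriv ?_
      ring
    · have ht : Tendsto (fun t : ℝ => Real.exp (-z * t)) atTop (nhds 0) :=
        Real.tendsto_exp_atBot.comp (tendsto_id.const_mul_atTop_of_neg (by linarith))
      have ht2 : Tendsto (fun t : ℝ => Real.exp (-z * t) * M) atTop (nhds 0) := by
        simpa using ht.mul_const M
      refine squeeze_zero_norm' ?_ ht2
      filter_upwards [eventually_ge_atTop 0] with t ht
      rw [norm_mul, Real.norm_of_nonneg (Real.exp_pos _).le]
      exact mul_le_mul_of_nonneg_left (hM t ht) (Real.exp_pos _).le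
  rw [integral_sub hDi (hfi.const_mul z), MeasureTheory.integral_const_mul] at hparts
  have hneg : α / (α - 1) - z < 0 := by linarith
  have hconv := integral_posConvolution (μ := volume) (ν := volume) hDi
    (integrableOn_exp_mul_Ioi hneg 0) (ContinuousLinearMap.mul ℝ ℝ)
  simp only [ContinuousLinearMap.mul_apply'] at hconv
  rw [integral_exp_mul_Ioi hneg] at hconv
  have hL : ∀ t : ℝ, Real.exp (-z * t) * ((1 / (1 - α)) *
      ∫ τ in (0 : ℝ)..t, derivWithin f (Set.Ici 0) τ * Real.exp ((α / (α - 1)) * (t - τ)))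
      = (1 / (1 - α)) * ∫ τ in (0 : ℝ)..t, Real.exp (-z * τ) * derivWithin f (Ici 0) τ *
        Real.exp ((α / (α - 1) - z) * (t - τ)) := by
    intro t
    rw [mul_left_comm, ← intervalIntegral.integral_const_mul]
    congr 2
    ext τ
    have : Real.exp (-z * t) * Real.exp ((α / (α - 1)) * (t - τ))
        = Real.exp (-z * τ) * Real.exp ((α / (α - 1) - z) * (t - τ)) := by
      rw [← Real.exp_add, ← Real.exp_add]
      congr 1
      ring
    linear_combination derivWithin f (Ici 0) τ * this
  simp_rw [hL]
  rw [MeasureTheory.integral_const_mul, hconv]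
  have hI : ∫ t in Ioi (0 : ℝ), Real.exp (-z * t) * derivWithin f (Ici 0) t
      = z * (∫ t in Ioi (0 : ℝ), Real.exp (-z * t) * f t) - f 0 := by
    simp only [mul_zero, Real.exp_zero] at hparts
    linarith
  rw [hI]
  have hden : (1 - α) * z + α ≠ 0 := by
    have : 0 < (1 - α) * z := mul_pos (by linarith) hz
    linarith
  have hcz : α / (α - 1) - z = -((1 - α) * z + α) / (1 - α) := by
    field_simp
    ring
  rw [hcz, mul_zero, Real.exp_zero]
  field_simp
end

section
/- Let α ∈ (0,1), let x : [0,∞) → ℝ be continuously differentiable, and let u : [0,∞) → ℝ be differentiable. If (1/(1−α)) ∫_0^t x′(τ) · exp((α/(α−1))·(t−τ)) dτ = u(t) for all t ≥ 0, then x′(t) = α·u(t) + (1−α)·u′(t) for all t ≥ 0. -/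
open MeasureTheory intervalIntegral Real Set Filter

/-- If `x` is `C¹` on `[0,∞)`, `u` is differentiable on `[0,∞)`, and the Caputo–Fabrizio
fractional derivative of `x` equals `u(t)` for all `t ≥ 0`, then
`x'(t) = α u(t) + (1-α) u'(t)` for all `t ≥ 0`. -/
theorem cf_eq_u_implies_ode (α : ℝ) (hα : α ∈ Set.Ioo (0 : ℝ) 1) (x u : ℝ → ℝ)
    (hx : ContDiffOn ℝ 1 x (Set.Ici 0))
    (hu : DifferentiableOn ℝ u (Set.Ici 0))
    (h : ∀ t : ℝ, 0 ≤ t →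
      (1 / (1 - α)) *
        (∫ τ in (0 : ℝ)..t, derivWithin x (Set.Ici 0) τ * Real.exp ((α / (α - 1)) * (t - τ)))
      = u t) :
    ∀ t : ℝ, 0 ≤ t →
      derivWithin x (Set.Ici 0) t = α * u t + (1 - α) * derivWithin u (Set.Ici 0) t := by
  intro t ht
  obtain ⟨h0, h1⟩ := hα
  have hne : (1 - α) ≠ 0 := by linarith
  have hne' : (α - 1) ≠ 0 := by linarith
  set k := α / (α - 1) with hk
  set y := derivWithin x (Set.Ici 0) with hy
  have hyc : ContinuousOn y (Set.Ici 0) :=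
    hx.continuousOn_derivWithin (uniqueDiffOn_Ici 0) le_rfl
  let g : ℝ → ℝ := fun τ => y (max τ 0)
  have hg : Continuous g :=
    hyc.comp_continuous (continuous_id.max continuous_const) (fun τ => Set.mem_Ici.2 (le_max_right _ _))
  have hgy : ∀ τ, 0 ≤ τ → g τ = y τ := fun τ hτ => by simp [g, max_eq_left hτ]
  have hf : Continuous (fun τ => g τ * Real.exp (-(k * τ))) := by fun_prop
  let F : ℝ → ℝ := fun s => ∫ τ in (0 : ℝ)..s, g τ * Real.exp (-(k * τ))
  have hF : HasDerivAt F (g t * Real.exp (-(k * t))) t :=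
    intervalIntegral.integral_hasDerivAt_right (hf.intervalIntegrable _ _)
      (hf.stronglyMeasurableAtFilter _ _) hf.continuousAt
  have hE : HasDerivAt (fun s => Real.exp (k * s)) (Real.exp (k * t) * k) t := by
    simpa using ((hasDerivAt_id t).const_mul k).exp
  have hU := (hE.mul hF).const_mul (1 / (1 - α))
  have huU : ∀ s, 0 ≤ s → u s = 1 / (1 - α) * (Real.exp (k * s) * F s) := by
    intro s hs
    rw [← h s hs]
    congr 1
    simp only [F]
    rw [← intervalIntegral.integral_const_mul]
    apply intervalIntegral.integral_congr
    intro τ hτ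
    rw [uIcc_of_le hs] at hτ
    have e : k * (s - τ) = k * s + -(k * τ) := by ring
    simp only [hgy τ hτ.1, e, Real.exp_add]
    ring
  have hd : HasDerivWithinAt u _ (Set.Ici 0) t :=
    hU.hasDerivWithinAt.congr (fun s hs => huU s hs) (huU t ht)
  rw [hd.derivWithin (uniqueDiffOn_Ici 0 t ht), huU t ht, hgy t ht]
  have hee : Real.exp (k * t) * Real.exp (-(k * t)) = 1 := by
    rw [← Real.exp_add]; simp
  have hka : k * (1 - α) = -α := by rw [hk]; field_simp; ring
  have hc : (1 - α) * (1 / (1 - α)) = 1 := by field_simp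
  generalize 1 / (1 - α) = c at *
  linear_combination (-y t) * hee - (Real.exp (k * t) * (y t * Real.exp (-(k * t)))) * hc
    - c * Real.exp (k * t) * F t * hka
end

section
/- Let α ∈ (0,1), let x : [0,∞) → ℝ be continuously differentiable, and let u : [0,∞) → ℝ be continuous. If (1/(1−α)) ∫_0^t x′(τ) · exp((α/(α−1))·(t−τ)) dτ = u(t) for all t ≥ 0, then x(t) = x(0) + (1−α)·(u(t) − u(0)) + α·∫_0^t u(τ) dτ for all t ≥ 0. In particular, if u ≡ 0 then x(t) = x(0) for all t ≥ 0. -/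
open MeasureTheory intervalIntegral Real Set Filter

/-- If `x` is `C¹` on `[0,∞)`, `u` is continuous on `[0,∞)`, and the Caputo–Fabrizio
fractional derivative of `x` equals `u(t)` for all `t ≥ 0`, then
`x(t) = x(0) + (1-α)(u(t) - u(0)) + α ∫_0^t u(τ) dτ` for all `t ≥ 0`.
In particular, if `u ≡ 0` on `[0,∞)` then `x` is constant there. -/
theorem cf_eq_u_implies_integral_form (α : ℝ) (hα : α ∈ Set.Ioo (0 : ℝ) 1) (x u : ℝ → ℝ)
    (hx : ContDiffOn ℝ 1 x (Set.Ici 0))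
    (hu : ContinuousOn u (Set.Ici 0))
    (h : ∀ t : ℝ, 0 ≤ t →
      (1 / (1 - α)) *
        (∫ τ in (0 : ℝ)..t, derivWithin x (Set.Ici 0) τ * Real.exp ((α / (α - 1)) * (t - τ)))
      = u t) :
    (∀ t : ℝ, 0 ≤ t →
      x t = x 0 + (1 - α) * (u t - u 0) + α * ∫ τ in (0 : ℝ)..t, u τ)
    ∧ ((∀ t : ℝ, 0 ≤ t → u t = 0) → ∀ t : ℝ, 0 ≤ t → x t = x 0) := by
  obtain ⟨h0, h1⟩ := hα
  have ha : (1 - α) ≠ 0 := by linarith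
  have ha' : (α - 1) ≠ 0 := by linarith
  have main : ∀ t : ℝ, 0 ≤ t →
      x t = x 0 + (1 - α) * (u t - u 0) + α * ∫ τ in (0 : ℝ)..t, u τ := by
    set c := α / (α - 1) with hc
    have hc' : (1 - α) * c = -α := by rw [hc]; field_simp; ring
    have hd : ContinuousOn (derivWithin x (Set.Ici 0)) (Set.Ici 0) :=
      hx.continuousOn_derivWithin (uniqueDiffOn_Ici 0) le_rfl
    let g : ℝ → ℝ := fun τ => derivWithin x (Set.Ici 0) (max τ 0)
    have hg : Continuous g :=
      hd.comp_continuous (by fun_prop) (fun τ => Set.mem_Ici.2 (le_max_right _ _))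
    have hgeq : ∀ τ, 0 ≤ τ → g τ = derivWithin x (Set.Ici 0) τ := fun τ hτ => by
      simp only [g, max_eq_left hτ]
    let U : ℝ → ℝ := fun t =>
      (1 / (1 - α)) * (Real.exp (c * t) * ∫ τ in (0 : ℝ)..t, g τ * Real.exp (-(c * τ)))
    have hgc : Continuous fun τ => g τ * Real.exp (-(c * τ)) := by fun_prop
    have hU : ∀ t, HasDerivAt U (c * U t + (1 / (1 - α)) * g t) t := by
      intro t
      have e1 : HasDerivAt (fun t : ℝ => Real.exp (c * t)) (Real.exp (c * t) * (c * 1)) t :=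
        ((hasDerivAt_id t).const_mul c).exp
      have e2 := intervalIntegral.integral_hasDerivAt_right (hgc.intervalIntegrable 0 t)
        (hgc.stronglyMeasurableAtFilter _ _) hgc.continuousAt
      have e3 := (e1.mul e2).const_mul (1 / (1 - α))
      refine e3.congr_deriv ?_
      have : Real.exp (c * t) * Real.exp (-(c * t)) = 1 := by
        rw [← Real.exp_add]; simp
      simp only [U]
      linear_combination (1 / (1 - α)) * g t * this
    have hUc : Continuous U := continuous_iff_continuousAt.2 fun t => (hU t).continuousAt
    have hUu : ∀ t, 0 ≤ t → U t = u t := by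
      intro t ht
      rw [← h t ht]
      simp only [U]
      rw [← intervalIntegral.integral_const_mul]
      congr 1
      apply intervalIntegral.integral_congr
      intro τ hτ
      rw [uIcc_of_le ht] at hτ
      simp only
      rw [hgeq τ hτ.1, mul_sub, sub_eq_add_neg, Real.exp_add]
      ring
    clear_value U
    intro t ht
    have i1 : ∫ τ in (0 : ℝ)..t, (c * U τ + (1 / (1 - α)) * g τ) = U t - U 0 :=
      intervalIntegral.integral_eq_sub_of_hasDerivAt (fun τ _ => hU τ)
        (Continuous.intervalIntegrable (by fun_prop) _ _)
    have i2 : ∫ τ in (0 : ℝ)..t, g τ = x t - x 0 := by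
      apply intervalIntegral.integral_eq_sub_of_hasDerivAt_of_le ht
        (hx.continuousOn.mono Icc_subset_Ici_self) _ (hg.intervalIntegrable _ _)
      intro τ hτ
      rw [hgeq τ hτ.1.le]
      exact ((hx.differentiableOn one_ne_zero τ hτ.1.le).hasDerivWithinAt).hasDerivAt
        (Ici_mem_nhds hτ.1)
    have i3 : ∫ τ in (0 : ℝ)..t, U τ = ∫ τ in (0 : ℝ)..t, u τ := by
      apply intervalIntegral.integral_congr
      intro τ hτ
      rw [uIcc_of_le ht] at hτ
      exact hUu τ hτ.1
    rw [intervalIntegral.integral_add (Continuous.intervalIntegrable (by fun_prop) _ _)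
      (Continuous.intervalIntegrable (by fun_prop) _ _), intervalIntegral.integral_const_mul,
      intervalIntegral.integral_const_mul, i2, i3, hUu t ht, hUu 0 le_rfl] at i1
    have hi : (1 - α) * (1 / (1 - α)) = 1 := by field_simp
    linear_combination (1 - α) * i1 - (∫ τ in (0 : ℝ)..t, u τ) * hc' - (x t - x 0) * hi
  refine ⟨main, fun hz t ht => ?_⟩
  have i0 : ∫ τ in (0 : ℝ)..t, u τ = 0 := by
    rw [intervalIntegral.integral_congr (g := fun _ => (0 : ℝ))]
    · simp
    · intro τ hτ
      rw [uIcc_of_le ht] at hτ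
      exact hz τ hτ.1
  rw [main t ht, i0, hz t ht, hz 0 le_rfl]
  ring
end

section
/- Let α ∈ (0,1), c ∈ ℝ, and let u : [0,∞) → ℝ be continuously differentiable with u(0) = 0. Define y(t) = c + (1−α)·u(t) + α·∫_0^t u(τ) dτ. Then y is continuously differentiable and (1/(1−α)) ∫_0^t y′(τ) · exp((α/(α−1))·(t−τ)) dτ = u(t) for all t ≥ 0. -/
open MeasureTheory intervalIntegral Real Set Filter

/-- If `u` is `C¹` on `[0,∞)` with `u(0) = 0` and
`y(t) = c + (1-α) u(t) + α ∫_0^t u(τ) dτ`, then `y` is `C¹` on `[0,∞)` and the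
Caputo–Fabrizio fractional derivative of `y` equals `u(t)` for all `t ≥ 0`. -/
theorem cf_integral_is_solution (α : ℝ) (hα : α ∈ Set.Ioo (0 : ℝ) 1) (c : ℝ) (u : ℝ → ℝ)
    (hu : ContDiffOn ℝ 1 u (Set.Ici 0)) (hu0 : u 0 = 0)
    (y : ℝ → ℝ)
    (hy : ∀ t : ℝ, y t = c + (1 - α) * u t + α * ∫ τ in (0 : ℝ)..t, u τ) :
    ContDiffOn ℝ 1 y (Set.Ici 0) ∧
      ∀ t : ℝ, 0 ≤ t →
        (1 / (1 - α)) *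
          (∫ τ in (0 : ℝ)..t, derivWithin y (Set.Ici 0) τ * Real.exp ((α / (α - 1)) * (t - τ)))
        = u t := by
  obtain ⟨h0, h1⟩ := hα
  have huc : ContinuousOn u (Set.Ici 0) := hu.continuousOn
  have hud : ∀ t ∈ Set.Ici (0:ℝ), HasDerivWithinAt u (derivWithin u (Set.Ici 0) t) (Set.Ici 0) t :=
    fun t ht => ((hu.differentiableOn (by norm_num)) t ht).hasDerivWithinAt
  have hudc : ContinuousOn (derivWithin u (Set.Ici 0)) (Set.Ici 0) :=
    hu.continuousOn_derivWithin (uniqueDiffOn_Ici 0) le_rfl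
  have hv : Continuous (fun t => u (max t 0)) :=
    huc.comp_continuous (by fun_prop) (fun t => le_max_right t 0)
  have hyv : ∀ t ∈ Set.Ici (0:ℝ),
      y t = c + (1 - α) * u t + α * ∫ τ in (0 : ℝ)..t, u (max τ 0) := by
    intro t ht
    rw [hy]
    congr 2
    apply intervalIntegral.integral_congr
    intro x hx
    rw [Set.uIcc_of_le ht] at hx
    simp only [max_eq_left hx.1]
  have hyd : ∀ t ∈ Set.Ici (0:ℝ), HasDerivWithinAt y
      ((1 - α) * derivWithin u (Set.Ici 0) t + α * u t) (Set.Ici 0) t := by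
    intro t ht
    have hI : HasDerivAt (fun t => ∫ τ in (0 : ℝ)..t, u (max τ 0)) (u (max t 0)) t :=
      (hv.integral_hasStrictDerivAt 0 t).hasDerivAt
    rw [max_eq_left ht] at hI
    exact ((((hud t ht).const_mul (1 - α)).const_add c).add
      (hI.hasDerivWithinAt.const_mul α)).congr hyv (hyv t ht)
  have hyd' : ∀ t ∈ Set.Ici (0:ℝ), derivWithin y (Set.Ici 0) t =
      (1 - α) * derivWithin u (Set.Ici 0) t + α * u t := fun t ht =>
    (hyd t ht).derivWithin (uniqueDiffOn_Ici 0 t ht)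
  have hcont : ContinuousOn (derivWithin y (Set.Ici 0)) (Set.Ici 0) :=
    ((hudc.const_mul (1 - α)).add (huc.const_mul α)).congr hyd'
  refine ⟨?_, ?_⟩
  · exact (contDiffOn_one_iff_derivWithin (uniqueDiffOn_Ici (0:ℝ))).2
      ⟨fun t ht => (hyd t ht).differentiableWithinAt, hcont⟩
  · intro t ht
    have hne : (1 - α) ≠ 0 := by linarith
    have hne' : (α - 1) ≠ 0 := by linarith
    have hsub : Set.Icc 0 t ⊆ Set.Ici (0:ℝ) := fun x hx => hx.1
    have key := intervalIntegral.integral_eq_sub_of_hasDerivAt_of_le ht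
      (f := fun τ => (1 - α) * u τ * Real.exp ((α / (α - 1)) * (t - τ)))
      (f' := fun τ => derivWithin y (Set.Ici 0) τ * Real.exp ((α / (α - 1)) * (t - τ)))
      (((huc.mono hsub).const_mul (1 - α)).mul (by fun_prop))
      (by
        intro x hx
        have hx0 : x ∈ Set.Ici (0:ℝ) := hx.1.le
        have hux := (hud x hx0).hasDerivAt (Ici_mem_nhds hx.1)
        have he : HasDerivAt (fun τ => Real.exp ((α / (α - 1)) * (t - τ)))
            (Real.exp ((α / (α - 1)) * (t - x)) * ((α / (α - 1)) * (-1))) x :=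
          (((hasDerivAt_id x).const_sub t).const_mul _).exp
        have := (hux.const_mul (1 - α)).mul he
        refine this.congr_deriv ?_
        rw [hyd' x hx0]
        field_simp
        ring)
      (ContinuousOn.intervalIntegrable (by
        rw [Set.uIcc_of_le ht]
        exact (hcont.mono hsub).mul (by fun_prop)))
    rw [key]
    simp [hu0]
    field_simp
end

section
/- Let α ∈ (0,1), λ ∈ ℝ with K := 1 − λ(1−α) ≠ 0, set p := λα/K, and let u : [0,∞) → ℝ be continuously differentiable. Let x₀ ∈ ℝ satisfy the compatibility condition λ·x₀ + u(0) = 0. Then the function x(t) = (x₀/K)·e^{pt} + ((1−α)/K)·u(t) + (α/K²)·∫_0^t e^{p(t−τ)} u(τ) dτ is continuously differentiable, satisfies x(0) = x₀, and solves (1/(1−α)) ∫_0^t x′(τ) · exp((α/(α−1))·(t−τ)) dτ = λ·x(t) + u(t) for all t ≥ 0. -/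
open MeasureTheory intervalIntegral Real Set Filter

/-- Explicit solution of the linear Caputo–Fabrizio equation
`(CF Δ^(α) x)(t) = λ x(t) + u(t)` on `𝕋 = ℝ`: with `K = 1 - λ(1-α) ≠ 0`, `p = λα/K`,
under the compatibility condition `λ x₀ + u 0 = 0`, the function
`x(t) = (x₀/K) e^{pt} + ((1-α)/K) u(t) + (α/K²) ∫_0^t e^{p(t-τ)} u(τ) dτ`
is `C¹` on `[0,∞)`, satisfies `x 0 = x₀`, and solves the equation for all `t ≥ 0`. -/
theorem cf_linear_explicit_solution (α lam : ℝ) (hα : α ∈ Set.Ioo (0 : ℝ) 1)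
    (K : ℝ) (hK : K = 1 - lam * (1 - α)) (hK0 : K ≠ 0)
    (p : ℝ) (hp : p = lam * α / K)
    (u : ℝ → ℝ) (hu : ContDiffOn ℝ 1 u (Set.Ici 0))
    (x₀ : ℝ) (hcomp : lam * x₀ + u 0 = 0)
    (x : ℝ → ℝ)
    (hx : ∀ t : ℝ, x t = (x₀ / K) * Real.exp (p * t) + ((1 - α) / K) * u t
        + (α / K ^ 2) * ∫ τ in (0 : ℝ)..t, Real.exp (p * (t - τ)) * u τ) :
    ContDiffOn ℝ 1 x (Set.Ici 0) ∧ x 0 = x₀ ∧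
      ∀ t : ℝ, 0 ≤ t →
        (1 / (1 - α)) *
          (∫ τ in (0 : ℝ)..t, derivWithin x (Set.Ici 0) τ * Real.exp ((α / (α - 1)) * (t - τ)))
        = lam * x t + u t := by
  obtain ⟨h0, h1⟩ := hα
  have ha : (1 - α) ≠ 0 := by linarith
  have ha' : (α - 1) ≠ 0 := by linarith
  have huc : ContinuousOn u (Set.Ici 0) := hu.continuousOn
  have hv : Continuous (fun τ : ℝ => Real.exp (-(p * τ)) * u (max τ 0)) := by
    have : Continuous (fun τ : ℝ => u (max τ 0)) :=
      huc.comp_continuous (by fun_prop) (fun τ => le_max_right τ 0)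
    exact Continuous.mul (by fun_prop) this
  obtain ⟨F, hF⟩ : ∃ F : ℝ → ℝ, F = fun t => ∫ τ in (0 : ℝ)..t,
    Real.exp (-(p * τ)) * u (max τ 0) := ⟨_, rfl⟩
  have hFd : ∀ t, HasDerivAt F (Real.exp (-(p * t)) * u (max t 0)) t := by
    intro t
    rw [hF]
    exact hv.integral_hasStrictDerivAt 0 t |>.hasDerivAt
  have hFc : ContDiff ℝ 1 F := by
    rw [contDiff_one_iff_deriv]
    refine ⟨fun t => (hFd t).differentiableAt, ?_⟩
    rw [show deriv F = _ from funext fun t => (hFd t).deriv]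
    exact hv
  have hF0 : F 0 = 0 := by rw [hF]; simp
  have hxz : ∀ t ∈ Set.Ici (0 : ℝ), x t = (x₀ / K) * Real.exp (p * t) + ((1 - α) / K) * u t
        + (α / K ^ 2) * (Real.exp (p * t) * F t) := by
    intro t ht
    rw [hx t, hF]
    simp only
    rw [← intervalIntegral.integral_const_mul (Real.exp (p * t))]
    congr 2
    apply intervalIntegral.integral_congr
    intro τ hτ
    rw [Set.uIcc_of_le ht] at hτ
    simp only
    rw [max_eq_left hτ.1, ← mul_assoc, ← Real.exp_add]
    ring_nf
  have hxC : ContDiffOn ℝ 1 x (Set.Ici 0) := by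
    refine ContDiffOn.congr ?_ hxz
    have e : ContDiffOn ℝ 1 (fun t => Real.exp (p * t)) (Set.Ici 0) :=
      ContDiff.contDiffOn (by fun_prop)
    have hF' := hFc.contDiffOn (s := Set.Ici 0)
    exact ((contDiffOn_const.mul e).add (contDiffOn_const.mul hu)).add
      (contDiffOn_const.mul (e.mul hF'))
  have hx0 : x 0 = x₀ := by
    rw [hxz 0 (by simp), hF0]
    have : u 0 = - (lam * x₀) := by linarith
    rw [this]
    simp only [mul_zero, Real.exp_zero]
    field_simp
    rw [hK]; ring
  refine ⟨hxC, hx0, ?_⟩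
  intro t ht
  have hxc := hxC.continuousOn
  have hdc : ContinuousOn (derivWithin x (Set.Ici 0)) (Set.Ici 0) :=
    hxC.continuousOn_derivWithin (uniqueDiffOn_Ici 0) le_rfl
  have hsub : Set.Icc 0 t ⊆ Set.Ici (0 : ℝ) := Set.Icc_subset_Ici_self
  have key := intervalIntegral.integral_eq_sub_of_hasDerivAt_of_le
    (f := fun τ => (1 - α) * (lam * x τ + u τ) * Real.exp ((α / (α - 1)) * (t - τ)))
    (f' := fun τ => derivWithin x (Set.Ici 0) τ * Real.exp ((α / (α - 1)) * (t - τ))) ht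
    (by
      have h1 := hxc.mono hsub
      have h2 := huc.mono hsub
      fun_prop)
    (by
      intro τ hτ
      have hn : Set.Ici (0 : ℝ) ∈ nhds τ := Ici_mem_nhds hτ.1
      rw [derivWithin_of_mem_nhds hn]
      have dx := ((hxC.differentiableOn one_ne_zero).differentiableAt hn).hasDerivAt
      have du := ((hu.differentiableOn one_ne_zero).differentiableAt hn).hasDerivAt
      have de : HasDerivAt (fun s => Real.exp (p * s)) (Real.exp (p * τ) * p) τ := by
        simpa using ((hasDerivAt_id τ).const_mul p).exp
      have dz := ((de.const_mul (x₀ / K)).add (du.const_mul ((1 - α) / K))).add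
        ((de.mul (hFd τ)).const_mul (α / K ^ 2))
      have e1 := (dz.congr_of_eventuallyEq (f₁ := x)
        (Filter.eventually_of_mem hn hxz)).unique dx
      have e2 := hxz τ hτ.1.le
      have dE : HasDerivAt (fun s => Real.exp ((α / (α - 1)) * (t - s)))
          (Real.exp ((α / (α - 1)) * (t - τ)) * (-(α / (α - 1)))) τ := by
        simpa using (((hasDerivAt_id τ).const_sub t).const_mul (α / (α - 1))).exp
      have dG := (((dx.const_mul lam).add du).const_mul (1 - α)).mul dE
      refine dG.congr_deriv ?_
      have e3 : Real.exp (p * τ) * (Real.exp (-(p * τ)) * u (max τ 0)) = u τ := by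
        rw [max_eq_left hτ.1.le, ← mul_assoc, ← Real.exp_add]; simp
      rw [e3] at e1
      have main : K * deriv x τ = (1 - α) * deriv u τ + α * lam * x τ + α * u τ := by
        rw [← e1, e2, hp]
        field_simp
        rw [hK]; ring
      have hb : (1 - α) * (-(α / (α - 1))) = α := by field_simp; ring
      rw [hK] at main
      simp only [Pi.add_apply]
      linear_combination (Real.exp ((α / (α - 1)) * (t - τ))) *
        ((lam * x τ + u τ) * hb - main))
    (by
      apply ContinuousOn.intervalIntegrable
      rw [Set.uIcc_of_le ht]
      have h1 := hdc.mono hsub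
      fun_prop)
  rw [key, hx0, hcomp]
  simp
  field_simp
end

section
/- Let α ∈ (0,1) and λ ∈ ℝ with 1 − λ(1−α) ≠ 0. If y : [0,∞) → ℝ is continuously differentiable, satisfies y(0) = 0, and (1/(1−α)) ∫_0^t y′(τ) · exp((α/(α−1))·(t−τ)) dτ = λ·y(t) for all t ≥ 0, then y(t) = 0 for all t ≥ 0. Consequently, two C¹ solutions of the linear equation (CF Δ^{(α)} x)(t) = λ·x(t) + u(t) with the same initial value x(0) coincide. -/
open MeasureTheory intervalIntegral Real Set Filter

theorem cf_aux_cont (y : ℝ → ℝ) (hy : ContDiffOn ℝ 1 y (Set.Ici 0)) :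
    ContinuousOn (derivWithin y (Set.Ici 0)) (Set.Ici 0) :=
  hy.continuousOn_derivWithin (uniqueDiffOn_Ici 0) le_rfl

theorem cf_aux (α lam : ℝ) (hα : α ∈ Set.Ioo (0 : ℝ) 1)
    (hK : 1 - lam * (1 - α) ≠ 0) (y : ℝ → ℝ) (hy : ContDiffOn ℝ 1 y (Set.Ici 0)) (h0 : y 0 = 0)
    (h : ∀ t : ℝ, 0 ≤ t →
        (1 / (1 - α)) *
          (∫ τ in (0 : ℝ)..t, derivWithin y (Set.Ici 0) τ * Real.exp ((α / (α - 1)) * (t - τ)))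
        = lam * y t) (t : ℝ) (ht : 0 ≤ t) : y t = 0 := by
  have hb : (1 - α) ≠ 0 := by linarith [hα.2]
  generalize α / (α - 1) = c at h
  set b := 1 - α with hbdef
  have hg := cf_aux_cont y hy
  have hyd : ∀ s, 0 < s → HasDerivAt y (derivWithin y (Set.Ici 0) s) s := fun s hs =>
    ((hy.differentiableOn one_ne_zero s hs.le).hasDerivWithinAt).hasDerivAt (Ici_mem_nhds hs)
  generalize derivWithin y (Set.Ici 0) = g at *
  have hE : ∀ k s : ℝ, HasDerivAt (fun s => Real.exp (k * s)) (Real.exp (k * s) * k) s := by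
    intro k s
    simpa using ((hasDerivAt_id s).const_mul k).exp
  have hc : ContinuousOn (fun τ => g τ * Real.exp (-c * τ)) (Set.Ici 0) :=
    hg.mul (by fun_prop)
  have hJ : ∀ s, 0 ≤ s → ∫ τ in (0:ℝ)..s, g τ * Real.exp (-c * τ)
      = b * lam * (y s * Real.exp (-c * s)) := by
    intro s hs
    have h1 := h s hs
    have h2 : ∫ τ in (0:ℝ)..s, g τ * Real.exp (c * (s - τ))
        = Real.exp (c * s) * ∫ τ in (0:ℝ)..s, g τ * Real.exp (-c * τ) := by
      rw [← intervalIntegral.integral_const_mul]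
      congr 1; ext τ
      rw [show c * (s - τ) = c * s + -c * τ by ring, Real.exp_add]; ring
    rw [h2] at h1
    have h3 : Real.exp (c * s) * Real.exp (-c * s) = 1 := by
      rw [← Real.exp_add]; simp
    rw [one_div, inv_mul_eq_iff_eq_mul₀ hb] at h1
    linear_combination Real.exp (-c * s) * h1 - (∫ τ in (0:ℝ)..s, g τ * Real.exp (-c * τ)) * h3
  have hode : ∀ s, 0 < s → g s * (1 - lam * b) = - (c * b * lam) * y s := by
    intro s hs
    have d1 : HasDerivAt (fun s => ∫ τ in (0:ℝ)..s, g τ * Real.exp (-c * τ))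
        (g s * Real.exp (-c * s)) s := by
      apply intervalIntegral.integral_hasDerivAt_right
      · apply ContinuousOn.intervalIntegrable
        apply hc.mono
        rw [uIcc_of_le hs.le]
        exact Icc_subset_Ici_self
      · exact (hc.mono Ioi_subset_Ici_self).stronglyMeasurableAtFilter isOpen_Ioi s hs
      · exact hc.continuousAt (Ici_mem_nhds hs)
    have d2 := ((hyd s hs).mul (hE (-c) s)).const_mul (b * lam)
    have d3 := d2.congr_of_eventuallyEq (f₁ := fun s => ∫ τ in (0:ℝ)..s, g τ * Real.exp (-c * τ))
      (by filter_upwards [Ici_mem_nhds hs] with r hr using hJ r hr)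
    have e := d1.unique d3
    have hp := (Real.exp_pos (-c * s)).ne'
    apply mul_left_cancel₀ hp
    linear_combination e
  rcases ht.eq_or_lt with rfl | ht
  · exact h0
  set k := - (c * b * lam) / (1 - lam * b) with hk
  obtain ⟨s, hs, e⟩ := exists_hasDerivAt_eq_slope (fun s => y s * Real.exp (-k * s))
    (fun s => g s * Real.exp (-k * s) + y s * (Real.exp (-k * s) * -k)) ht
    ((hy.continuousOn.mono Icc_subset_Ici_self).mul (by fun_prop))
    (fun s hs => (hyd s hs.1).mul (hE (-k) s))
  have e2 : g s = k * y s := by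
    rw [hk, div_mul_eq_mul_div, eq_div_iff hK]; exact hode s hs.1
  simp only [e2, h0] at e
  rw [eq_div_iff (by linarith)] at e
  have : y t * Real.exp (-k * t) = 0 := by linear_combination -e
  exact (mul_eq_zero.1 this).resolve_right (Real.exp_pos _).ne'

/-- Uniqueness for the linear Caputo–Fabrizio equation on `𝕋 = ℝ`: if `y` is `C¹` on
`[0,∞)`, `y 0 = 0` and `(CF Δ^(α) y)(t) = λ y(t)` for all `t ≥ 0`, then `y ≡ 0` on `[0,∞)`.
Consequently, two `C¹` solutions of `(CF Δ^(α) x)(t) = λ x(t) + u(t)` with the same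
initial value coincide on `[0,∞)`. -/
theorem cf_linear_uniqueness (α lam : ℝ) (hα : α ∈ Set.Ioo (0 : ℝ) 1)
    (hK : 1 - lam * (1 - α) ≠ 0) :
    (∀ y : ℝ → ℝ, ContDiffOn ℝ 1 y (Set.Ici 0) → y 0 = 0 →
      (∀ t : ℝ, 0 ≤ t →
        (1 / (1 - α)) *
          (∫ τ in (0 : ℝ)..t, derivWithin y (Set.Ici 0) τ * Real.exp ((α / (α - 1)) * (t - τ)))
        = lam * y t) →
      ∀ t : ℝ, 0 ≤ t → y t = 0)
    ∧
    (∀ u x₁ x₂ : ℝ → ℝ,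
      ContDiffOn ℝ 1 x₁ (Set.Ici 0) → ContDiffOn ℝ 1 x₂ (Set.Ici 0) →
      x₁ 0 = x₂ 0 →
      (∀ t : ℝ, 0 ≤ t →
        (1 / (1 - α)) *
          (∫ τ in (0 : ℝ)..t, derivWithin x₁ (Set.Ici 0) τ * Real.exp ((α / (α - 1)) * (t - τ)))
        = lam * x₁ t + u t) →
      (∀ t : ℝ, 0 ≤ t →
        (1 / (1 - α)) *
          (∫ τ in (0 : ℝ)..t, derivWithin x₂ (Set.Ici 0) τ * Real.exp ((α / (α - 1)) * (t - τ)))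
        = lam * x₂ t + u t) →
      ∀ t : ℝ, 0 ≤ t → x₁ t = x₂ t) := by
  refine ⟨fun y hy h0 h t ht => cf_aux α lam hα hK y hy h0 h t ht, ?_⟩
  intro u x₁ x₂ h1 h2 h0 e1 e2 t ht
  refine sub_eq_zero.1 (cf_aux α lam hα hK (fun s => x₁ s - x₂ s) (h1.sub h2)
    (by simp [h0]) ?_ t ht)
  intro s hs
  have hint : ∀ x : ℝ → ℝ, ContDiffOn ℝ 1 x (Set.Ici 0) → IntervalIntegrable
      (fun τ => derivWithin x (Set.Ici 0) τ * Real.exp ((α / (α - 1)) * (s - τ))) volume 0 s := by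
    intro x hx
    apply ContinuousOn.intervalIntegrable
    rw [uIcc_of_le hs]
    exact ((cf_aux_cont x hx).mono Icc_subset_Ici_self).mul (by fun_prop)
  have key : (∫ τ in (0 : ℝ)..s, derivWithin (fun s => x₁ s - x₂ s) (Set.Ici 0) τ
        * Real.exp ((α / (α - 1)) * (s - τ)))
      = (∫ τ in (0 : ℝ)..s, derivWithin x₁ (Set.Ici 0) τ * Real.exp ((α / (α - 1)) * (s - τ)))
      - ∫ τ in (0 : ℝ)..s, derivWithin x₂ (Set.Ici 0) τ * Real.exp ((α / (α - 1)) * (s - τ)) := by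
    rw [← intervalIntegral.integral_sub (hint x₁ h1) (hint x₂ h2)]
    apply intervalIntegral.integral_congr
    intro τ hτ
    rw [uIcc_of_le hs] at hτ
    have := derivWithin_fun_sub (h1.differentiableOn one_ne_zero τ hτ.1)
      (h2.differentiableOn one_ne_zero τ hτ.1)
    simp only [this]; ring
  rw [key]
  linear_combination e1 s hs - e2 s hs
end

section
/- Let α ∈ (0,1), λ ∈ ℝ with K := 1 − λ(1−α) ≠ 0, and set p := λα/K. Let x : [0,∞) → ℝ be continuously differentiable and u : [0,∞) → ℝ be differentiable. If (1/(1−α)) ∫_0^t x′(τ) · exp((α/(α−1))·(t−τ)) dτ = λ·x(t) + u(t) for all t ≥ 0, then x′(t) = p·x(t) + (α/K)·u(t) + ((1−α)/K)·u′(t) for all t ≥ 0. -/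
open MeasureTheory intervalIntegral Real Set Filter

/-- Reduction of the linear Caputo–Fabrizio equation to a first-order ODE: if
`(CF Δ^(α) x)(t) = λ x(t) + u(t)` for all `t ≥ 0`, with `K = 1 - λ(1-α) ≠ 0` and
`p = λα/K`, then `x'(t) = p x(t) + (α/K) u(t) + ((1-α)/K) u'(t)` for all `t ≥ 0`. -/
theorem cf_linear_reduces_to_ode (α lam : ℝ) (hα : α ∈ Set.Ioo (0 : ℝ) 1)
    (K : ℝ) (hK : K = 1 - lam * (1 - α)) (hK0 : K ≠ 0)
    (p : ℝ) (hp : p = lam * α / K)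
    (x u : ℝ → ℝ)
    (hx : ContDiffOn ℝ 1 x (Set.Ici 0))
    (hu : DifferentiableOn ℝ u (Set.Ici 0))
    (h : ∀ t : ℝ, 0 ≤ t →
      (1 / (1 - α)) *
        (∫ τ in (0 : ℝ)..t, derivWithin x (Set.Ici 0) τ * Real.exp ((α / (α - 1)) * (t - τ)))
      = lam * x t + u t) :
    ∀ t : ℝ, 0 ≤ t →
      derivWithin x (Set.Ici 0) t
        = p * x t + (α / K) * u t + ((1 - α) / K) * derivWithin u (Set.Ici 0) t := by
  intro t ht
  obtain ⟨hα0, hα1⟩ := hα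
  have h1 : (1 - α) ≠ 0 := by linarith
  have h2 : (α - 1) ≠ 0 := by linarith
  set c := α / (α - 1) with hc
  have hg : ContinuousOn (derivWithin x (Set.Ici 0)) (Set.Ici 0) :=
    hx.continuousOn_derivWithin (uniqueDiffOn_Ici 0) le_rfl
  set G : ℝ → ℝ := fun τ => derivWithin x (Set.Ici 0) (max τ 0) with hG
  have hGc : Continuous G :=
    hg.comp_continuous (by fun_prop) (fun τ => le_max_right τ 0)
  have hfc : Continuous (fun τ => G τ * Real.exp (-(c * τ))) := by fun_prop
  have hI : HasDerivAt (fun s => ∫ τ in (0 : ℝ)..s, G τ * Real.exp (-(c * τ)))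
      (G t * Real.exp (-(c * t))) t :=
    intervalIntegral.integral_hasDerivAt_right (hfc.intervalIntegrable _ _)
      (hfc.stronglyMeasurableAtFilter _ _) hfc.continuousAt
  have hE : HasDerivAt (fun s : ℝ => Real.exp (c * s)) (Real.exp (c * t) * c) t := by
    simpa using ((hasDerivAt_id t).const_mul c).exp
  have hF := (hE.mul hI).hasDerivWithinAt (s := Set.Ici 0)
  have key : ∀ s : ℝ, 0 ≤ s → Real.exp (c * s) * (∫ τ in (0 : ℝ)..s, G τ * Real.exp (-(c * τ)))
      = (1 - α) * (lam * x s + u s) := by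
    intro s hs
    rw [← h s hs, ← mul_assoc, mul_one_div_cancel h1, one_mul,
      ← intervalIntegral.integral_const_mul]
    apply intervalIntegral.integral_congr
    intro τ hτ
    rw [Set.uIcc_of_le hs] at hτ
    have e : c * (s - τ) = c * s + -(c * τ) := by ring
    simp only [hG, max_eq_left hτ.1, e, Real.exp_add]
    ring
  have hx' := ((hx.differentiableOn one_ne_zero) t ht).hasDerivWithinAt
  have hu' := (hu t ht).hasDerivWithinAt
  have hR := ((hx'.const_mul lam).add hu').const_mul (1 - α)
  have hR2 := hR.congr_of_mem (fun s hs => key s hs) ht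
  have huq := (uniqueDiffOn_Ici (0 : ℝ) t ht).eq_deriv _ hF hR2
  have hGt : G t = derivWithin x (Set.Ici 0) t := by simp only [hG, max_eq_left ht]
  have hee : Real.exp (c * t) * Real.exp (-(c * t)) = 1 := by
    rw [← Real.exp_add]; simp
  have hk := key t ht
  have hc1 : c * (1 - α) = -α := by rw [hc]; field_simp; ring
  rw [hGt] at huq
  generalize derivWithin x (Set.Ici 0) t = X at *
  generalize derivWithin u (Set.Ici 0) t = U at *
  have h3 : K * X = lam * α * x t + α * u t + (1 - α) * U := by
    rw [hK]
    linear_combination huq - c * hk - X * hee - (lam * x t + u t) * hc1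
  rw [hp]
  field_simp
  linear_combination h3
end

section
/- Let α ∈ (0,1) and let x : [0,∞) → ℝ be continuously differentiable. If (1/(1−α)) ∫_0^t x′(τ) · exp((α/(α−1))·(t−τ)) dτ = 0 for all t ≥ 0, then x is constant: x(t) = x(0) for all t ≥ 0. -/
open MeasureTheory intervalIntegral Real Set Filter

/-- If the Caputo–Fabrizio fractional derivative of a `C¹` function `x` on `[0,∞)`
vanishes identically, then `x` is constant on `[0,∞)`. -/
theorem cf_deriv_zero_implies_const (α : ℝ) (hα : α ∈ Set.Ioo (0 : ℝ) 1) (x : ℝ → ℝ)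
    (hx : ContDiffOn ℝ 1 x (Set.Ici 0))
    (h : ∀ t : ℝ, 0 ≤ t →
      (1 / (1 - α)) *
        (∫ τ in (0 : ℝ)..t, derivWithin x (Set.Ici 0) τ * Real.exp ((α / (α - 1)) * (t - τ)))
      = 0) :
    ∀ t : ℝ, 0 ≤ t → x t = x 0 := by
  have hα1 : (1 / (1 - α)) ≠ 0 := by
    have h1 : 0 < 1 - α := by linarith [hα.2]
    positivity
  set c : ℝ := α / (α - 1) with hc
  set g : ℝ → ℝ := fun τ => derivWithin x (Set.Ici 0) τ * Real.exp (-(c * τ)) with hg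
  have hgc : ContinuousOn g (Set.Ici 0) := by
    refine ContinuousOn.mul (hx.continuousOn_derivWithin (uniqueDiffOn_Ici 0) le_rfl) ?_
    fun_prop
  have hint : ∀ t : ℝ, 0 ≤ t → ∫ τ in (0 : ℝ)..t, g τ = 0 := by
    intro t ht
    have h1 := (mul_eq_zero.mp (h t ht)).resolve_left hα1
    have h2 : (fun τ => derivWithin x (Set.Ici 0) τ * Real.exp (c * (t - τ)))
        = fun τ => Real.exp (c * t) * g τ := by
      funext τ
      have : c * (t - τ) = c * t + -(c * τ) := by ring
      rw [this, Real.exp_add, hg]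
      ring
    rw [h2, intervalIntegral.integral_const_mul] at h1
    exact (mul_eq_zero.mp h1).resolve_left (Real.exp_pos _).ne'
  have hg0 : ∀ t : ℝ, 0 < t → g t = 0 := by
    intro t ht
    have hd : HasDerivAt (fun u => ∫ τ in (0 : ℝ)..u, g τ) (g t) t := by
      apply intervalIntegral.integral_hasDerivAt_right
      · apply ContinuousOn.intervalIntegrable
        rw [Set.uIcc_of_le ht.le]
        exact hgc.mono Set.Icc_subset_Ici_self
      · exact (hgc.mono Set.Ioi_subset_Ici_self).stronglyMeasurableAtFilter isOpen_Ioi t ht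
      · exact hgc.continuousAt (Ici_mem_nhds ht)
    have hz : HasDerivAt (fun u => ∫ τ in (0 : ℝ)..u, g τ) 0 t := by
      refine (hasDerivAt_const t (0 : ℝ)).congr_of_eventuallyEq ?_
      filter_upwards [Ici_mem_nhds ht] with u hu
      exact hint u hu
    exact hd.unique hz
  intro t ht
  have hmain := intervalIntegral.integral_eq_sub_of_hasDerivAt_of_le (f := x)
    (f' := fun _ => (0 : ℝ)) ht (hx.continuousOn.mono Set.Icc_subset_Ici_self) (by
      intro s hs
      have h1 := (hx.differentiableOn one_ne_zero s hs.1.le).hasDerivWithinAt.hasDerivAt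
        (Ici_mem_nhds hs.1)
      have h2 := (mul_eq_zero.mp (hg0 s hs.1)).resolve_right (Real.exp_pos _).ne'
      rwa [h2] at h1) (by simp)
  simp at hmain
  linarith
end

section
/- Let α ∈ (0,1), h > 0 with h > 2(1−α)/α, and λ ∈ ℝ with K := 1 − λ(1−α) ≠ 0. Then the stability parameter p := λα/K satisfies −2/h < p < 0 if and only if −2/(hα − 2(1−α)) < λ < 0. -/
/-- Exponential stability condition for the Caputo–Fabrizio linear equation on `𝕋 = hℤ`
in the case `h > 2(1-α)/α`: with `K = 1 - λ(1-α) ≠ 0` and `p = λα/K`, one has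
`-2/h < p < 0` if and only if `-2/(hα - 2(1-α)) < λ < 0`. -/
theorem cf_stability_hZ_large_h (α h lam : ℝ) (hα : α ∈ Set.Ioo (0 : ℝ) 1)
    (hh : 0 < h) (hh' : h > 2 * (1 - α) / α)
    (K : ℝ) (hK : K = 1 - lam * (1 - α)) (hK0 : K ≠ 0)
    (p : ℝ) (hp : p = lam * α / K) :
    (-2 / h < p ∧ p < 0) ↔ (-2 / (h * α - 2 * (1 - α)) < lam ∧ lam < 0) := by
  obtain ⟨h0, h1⟩ := hα
  have hD : 0 < h * α - 2 * (1 - α) := by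
    have := (div_lt_iff₀ h0).1 hh'
    linarith
  rw [div_lt_iff₀ hD]
  rcases lt_or_gt_of_ne hK0 with hKn | hKp
  · have hl : 0 < lam := by
      by_contra hc
      nlinarith [mul_nonneg (neg_nonneg.2 (not_lt.1 hc)) (sub_nonneg.2 h1.le)]
    constructor
    · rintro ⟨h2, -⟩
      exfalso
      rw [div_lt_iff₀ hh] at h2
      have e : p * K = lam * α := by rw [hp]; field_simp
      have h3 := mul_lt_mul_of_neg_right h2 hKn
      have e2 : p * h * K = lam * α * h := by rw [← e]; ring
      rw [e2, hK] at h3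
      nlinarith [mul_pos hl hD]
    · rintro ⟨-, h2⟩
      linarith
  · have e : p < 0 ↔ lam < 0 := by
      rw [hp, div_lt_iff₀ hKp, zero_mul]
      constructor
      · intro hx
        by_contra hc
        nlinarith [mul_nonneg (not_lt.1 hc) h0.le]
      · intro hx
        exact mul_neg_of_neg_of_pos hx h0
    rw [e, hp, div_lt_div_iff₀ hh hKp, hK]
    constructor
    · rintro ⟨a, b⟩
      exact ⟨by linarith, b⟩
    · rintro ⟨a, b⟩
      exact ⟨by linarith, b⟩
end

section
/- Let α ∈ (0,1), h > 0 with h < 2(1−α)/α, and λ ∈ ℝ with K := 1 − λ(1−α) ≠ 0. Then the stability parameter p := λα/K satisfies −2/h < p < 0 if and only if λ < 0 or λ > 2/(2(1−α) − hα). -/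
/-- Exponential stability condition for the Caputo–Fabrizio linear equation on `𝕋 = hℤ`
in the case `h < 2(1-α)/α`: with `K = 1 - λ(1-α) ≠ 0` and `p = λα/K`, one has
`-2/h < p < 0` if and only if `λ < 0` or `λ > 2/(2(1-α) - hα)`. -/
theorem cf_stability_hZ_small_h (α h lam : ℝ) (hα : α ∈ Set.Ioo (0 : ℝ) 1)
    (hh : 0 < h) (hh' : h < 2 * (1 - α) / α)
    (K : ℝ) (hK : K = 1 - lam * (1 - α)) (hK0 : K ≠ 0)
    (p : ℝ) (hp : p = lam * α / K) :
    (-2 / h < p ∧ p < 0) ↔ (lam < 0 ∨ lam > 2 / (2 * (1 - α) - h * α)) := by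
  obtain ⟨h0, h1⟩ := hα
  have hD : 0 < 2 * (1 - α) - h * α := by
    rw [lt_div_iff₀ h0] at hh'
    linarith
  have hha : 0 < h * α := mul_pos hh h0
  have hb : 0 < 1 - α := by linarith
  rw [gt_iff_lt, div_lt_iff₀ hD, hp]
  rcases lt_or_gt_of_ne hK0 with hneg | hpos
  · have hl : 0 < lam := by
      by_contra hc
      have := mul_nonneg (neg_nonneg.mpr (not_lt.mp hc)) hb.le
      linarith
    have h2 : lam * α / K < 0 := div_neg_of_pos_of_neg (mul_pos hl h0) hneg
    rw [div_lt_iff₀ hh, div_mul_eq_mul_div, lt_div_iff_of_neg hneg, hK]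
    constructor
    · rintro ⟨h3, -⟩
      right
      linarith
    · rintro (h3 | h3)
      · linarith
      · exact ⟨by linarith, hK ▸ h2⟩
  · rw [div_lt_iff₀ hh, div_mul_eq_mul_div, lt_div_iff₀ hpos, div_lt_iff₀ hpos, zero_mul, hK]
    constructor
    · rintro ⟨-, h3⟩
      left
      by_contra hc
      have := mul_nonneg (not_lt.mp hc) h0.le
      linarith
    · rintro (h3 | h3)
      · have h4 := mul_pos (neg_pos.mpr h3) hD
        have h5 := mul_pos (neg_pos.mpr h3) h0
        exact ⟨by linarith, by linarith⟩
      · exfalso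
        have hl : 0 < lam := by
          by_contra hc
          have := mul_nonneg (neg_nonneg.mpr (not_lt.mp hc)) hD.le
          linarith
        have := mul_pos hl hha
        linarith
end

section
/- Let α ∈ (0,1), h > 0, λ ∈ ℝ with 1 − λ(1−α) ≠ 0, x₀ ∈ ℝ, and u : ℕ → ℝ. Then there exists a unique sequence x : ℕ → ℝ with x(0) = x₀ such that for every k ≥ 1, (1/(1−α)) · Σ_{j=0}^{k−1} (x(j+1) − x(j)) · (1 + h·α/(α−1))^{k−1−j} = λ·x(k) + u(k). -/
open Finset

theorem cf_sum_succ (q : ℝ) (x : ℕ → ℝ) (k : ℕ) :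
    (∑ j ∈ Finset.range (k + 1), (x (j + 1) - x j) * q ^ (k + 1 - 1 - j))
      = q * (∑ j ∈ Finset.range k, (x (j + 1) - x j) * q ^ (k - 1 - j)) + (x (k + 1) - x k) := by
  rw [Finset.sum_range_succ, Finset.mul_sum]
  congr 1
  · apply Finset.sum_congr rfl
    intro j hj
    have hj' := Finset.mem_range.mp hj
    have e : k + 1 - 1 - j = (k - 1 - j) + 1 := by omega
    rw [e, pow_succ]
    ring
  · simp

/-- State of the recursion: the value and the memory sum. -/
noncomputable def cfState (q b lam x₀ : ℝ) (u : ℕ → ℝ) : ℕ → ℝ × ℝ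
  | 0 => (x₀, 0)
  | k + 1 =>
    let p := cfState q b lam x₀ u k
    let y := (p.1 - q * p.2 + b * u (k + 1)) / (1 - lam * b)
    (y, q * p.2 + (y - p.1))

/-- Existence and uniqueness of solutions to the linear Caputo–Fabrizio equation on the
time scale `𝕋 = hℤ`: there is a unique sequence `x` with `x 0 = x₀` satisfying
`(1/(1-α)) Σ_{j=0}^{k-1} (x(j+1) - x(j)) (1 + h α/(α-1))^{k-1-j} = λ x(k) + u(k)`
for every `k ≥ 1`. -/
theorem cf_linear_hZ_exists_unique (α h lam : ℝ) (hα : α ∈ Set.Ioo (0 : ℝ) 1)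
    (hh : 0 < h) (hK : 1 - lam * (1 - α) ≠ 0) (x₀ : ℝ) (u : ℕ → ℝ) :
    ∃! x : ℕ → ℝ, x 0 = x₀ ∧
      ∀ k : ℕ, 1 ≤ k →
        (1 / (1 - α)) *
          (∑ j ∈ Finset.range k, (x (j + 1) - x j) * (1 + h * (α / (α - 1))) ^ (k - 1 - j))
        = lam * x k + u k := by
  have hb : (1 - α) ≠ 0 := (sub_pos.mpr hα.2).ne'
  generalize 1 + h * (α / (α - 1)) = q
  generalize 1 - α = b at hK hb ⊢
  refine ⟨fun k => (cfState q b lam x₀ u k).1, ⟨rfl, ?_⟩, ?_⟩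
  · have hS : ∀ k, (∑ j ∈ Finset.range k, ((cfState q b lam x₀ u (j + 1)).1
        - (cfState q b lam x₀ u j).1) * q ^ (k - 1 - j)) = (cfState q b lam x₀ u k).2 := by
      intro k
      induction k with
      | zero => simp [cfState]
      | succ k ih =>
        rw [cf_sum_succ q (fun k => (cfState q b lam x₀ u k).1) k]
        simp only [ih]
        simp only [cfState]
    intro k hk
    obtain ⟨k, rfl⟩ : ∃ m, k = m + 1 := ⟨k - 1, by omega⟩
    simp only [hS]
    simp only [cfState]
    have hy := div_mul_cancel₀ ((cfState q b lam x₀ u k).1 - q * (cfState q b lam x₀ u k).2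
      + b * u (k + 1)) hK
    generalize ((cfState q b lam x₀ u k).1 - q * (cfState q b lam x₀ u k).2
      + b * u (k + 1)) / (1 - lam * b) = y at hy ⊢
    rw [one_div, inv_mul_eq_iff_eq_mul₀ hb]
    linarith
  · rintro x ⟨h0, hx⟩
    have key : ∀ k, x k = (cfState q b lam x₀ u k).1 ∧
        (∑ j ∈ Finset.range k, (x (j + 1) - x j) * q ^ (k - 1 - j))
          = (cfState q b lam x₀ u k).2 := by
      intro k
      induction k with
      | zero => simp [cfState, h0]
      | succ k ih =>
        have e := hx (k + 1) (by omega)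
        rw [cf_sum_succ, ih.2, ih.1] at e
        have e1 : x (k + 1) = (cfState q b lam x₀ u (k + 1)).1 := by
          simp only [cfState]
          rw [eq_div_iff hK]
          field_simp at e
          linarith
        refine ⟨e1, ?_⟩
        rw [cf_sum_succ, ih.2, ih.1, e1]
        simp only [cfState]
    funext k
    exact (key k).1
end

section
/- Let α ∈ (0,1), h > 0, x₀ ∈ ℝ, and let u : ℕ → ℝ satisfy u(0) = 0. Define x : ℕ → ℝ by x(k) = x₀ + (1−α)·u(k) + α·h·Σ_{j=0}^{k−1} u(j). Then x(0) = x₀ and for every k ≥ 0, (1/(1−α)) · Σ_{j=0}^{k−1} (x(j+1) − x(j)) · (1 + h·α/(α−1))^{k−1−j} = u(k). -/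
open Finset

/-- The Caputo–Fabrizio fractional delta-integral on `𝕋 = hℤ` solves the equation
`(CF Δ^(α) x)(t) = u(t)`: if `u 0 = 0` and
`x(k) = x₀ + (1-α) u(k) + α h Σ_{j<k} u(j)`, then `x 0 = x₀` and
`(1/(1-α)) Σ_{j=0}^{k-1} (x(j+1) - x(j)) (1 + h α/(α-1))^{k-1-j} = u(k)` for all `k`. -/
theorem cf_integral_hZ_is_solution (α h : ℝ) (hα : α ∈ Set.Ioo (0 : ℝ) 1)
    (hh : 0 < h) (x₀ : ℝ) (u : ℕ → ℝ) (hu0 : u 0 = 0)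
    (x : ℕ → ℝ)
    (hx : ∀ k : ℕ, x k = x₀ + (1 - α) * u k + α * h * ∑ j ∈ Finset.range k, u j) :
    x 0 = x₀ ∧
      ∀ k : ℕ,
        (1 / (1 - α)) *
          (∑ j ∈ Finset.range k, (x (j + 1) - x j) * (1 + h * (α / (α - 1))) ^ (k - 1 - j))
        = u k := by
  have h1 : (1 - α) ≠ 0 := (sub_pos.2 hα.2).ne'
  have h2 : (α - 1) ≠ 0 := fun h => h1 (by linarith)
  refine ⟨by simp [hx, hu0], ?_⟩
  have hq : (1 - α) * (1 + h * (α / (α - 1))) = 1 - α - α * h := by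
    field_simp
    ring
  generalize 1 + h * (α / (α - 1)) = q at hq ⊢
  have key : ∀ k : ℕ, (∑ j ∈ Finset.range k, (x (j + 1) - x j) * q ^ (k - 1 - j))
      = (1 - α) * u k := by
    intro k
    induction k with
    | zero => simp [hu0]
    | succ k ih =>
      have e : (∑ j ∈ Finset.range k, (x (j + 1) - x j) * q ^ (k + 1 - 1 - j))
          = q * ∑ j ∈ Finset.range k, (x (j + 1) - x j) * q ^ (k - 1 - j) := by
        rw [Finset.mul_sum]
        refine Finset.sum_congr rfl fun j hj => ?_
        have hj' := Finset.mem_range.1 hj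
        have : k + 1 - 1 - j = (k - 1 - j) + 1 := by omega
        rw [this, pow_succ]
        ring
      rw [Finset.sum_range_succ, e, ih]
      have d : x (k + 1) - x k = (1 - α) * u (k + 1) - (1 - α) * u k + α * h * u k := by
        rw [hx, hx, Finset.sum_range_succ]
        ring
      rw [d]
      simp only [Nat.add_sub_cancel, Nat.sub_self, pow_zero]
      linear_combination u k * hq
  intro k
  rw [key]
  field_simp
end

section
/- Let α ∈ (0,1), a < b be real numbers, x₀ ∈ ℝ, and let f : [a,b] × ℝ → ℝ be continuous and satisfy |f(t, x₁) − f(t, x₂)| ≤ L·|x₁ − x₂| for all t ∈ [a,b] and x₁, x₂ ∈ ℝ, where L > 0. If ((1−α) + α·(b−a))·L < 1, then there exists a unique continuous function x : [a,b] → ℝ satisfying x(t) = x₀ + α·∫_a^t f(τ, x(τ)) dτ + (1−α)·(f(t, x(t)) − f(a, x₀)) for all t ∈ [a,b]. -/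
open MeasureTheory intervalIntegral Set

lemma cf_comp_cont {a b : ℝ} {f : ℝ → ℝ → ℝ}
    (hf : ContinuousOn (fun p : ℝ × ℝ => f p.1 p.2) (Set.Icc a b ×ˢ Set.univ))
    {u : ℝ → ℝ} (hu : ContinuousOn u (Icc a b)) :
    ContinuousOn (fun t => f t (u t)) (Icc a b) :=
  hf.comp (f := fun t => (t, u t)) (continuousOn_id.prodMk hu) (fun t ht => ⟨ht, mem_univ _⟩)

lemma cf_int {a b : ℝ} {g : ℝ → ℝ} (hg : ContinuousOn g (Icc a b)) {t : ℝ} (ht : t ∈ Icc a b) :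
    IntervalIntegrable g volume a t := by
  apply ContinuousOn.intervalIntegrable
  rw [uIcc_of_le ht.1]
  exact hg.mono (Icc_subset_Icc_right ht.2)

lemma cf_est {α a b L x₀ : ℝ} (hα : α ∈ Set.Ioo (0 : ℝ) 1) (hL : 0 < L)
    {f : ℝ → ℝ → ℝ}
    (hf : ContinuousOn (fun p : ℝ × ℝ => f p.1 p.2) (Set.Icc a b ×ˢ Set.univ))
    (hlip : ∀ t ∈ Set.Icc a b, ∀ x₁ x₂ : ℝ, |f t x₁ - f t x₂| ≤ L * |x₁ - x₂|)
    {x y : ℝ → ℝ} (hx : ContinuousOn x (Icc a b)) (hy : ContinuousOn y (Icc a b))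
    {D : ℝ} (hD : ∀ t ∈ Icc a b, |x t - y t| ≤ D) {t : ℝ} (ht : t ∈ Icc a b) :
    |(x₀ + α * (∫ τ in a..t, f τ (x τ)) + (1 - α) * (f t (x t) - f a x₀)) -
     (x₀ + α * (∫ τ in a..t, f τ (y τ)) + (1 - α) * (f t (y t) - f a x₀))|
      ≤ (((1 - α) + α * (b - a)) * L) * D := by
  have hD0 : 0 ≤ D := (abs_nonneg _).trans (hD t ht)
  have h1 : ∀ s ∈ Icc a b, |f s (x s) - f s (y s)| ≤ L * D := fun s hs =>
    (hlip s hs _ _).trans (mul_le_mul_of_nonneg_left (hD s hs) hL.le)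
  have h2 : |(∫ τ in a..t, f τ (x τ)) - ∫ τ in a..t, f τ (y τ)| ≤ L * D * (b - a) := by
    rw [← intervalIntegral.integral_sub (cf_int (cf_comp_cont hf hx) ht)
      (cf_int (cf_comp_cont hf hy) ht)]
    have := intervalIntegral.norm_integral_le_of_norm_le_const (a := a) (b := t) (C := L * D)
      (f := fun τ => f τ (x τ) - f τ (y τ)) (by
        intro s hs
        rw [uIoc_of_le ht.1] at hs
        exact h1 s ⟨hs.1.le, hs.2.trans ht.2⟩)
    rw [Real.norm_eq_abs, abs_of_nonneg (sub_nonneg.2 ht.1)] at this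
    refine this.trans (mul_le_mul_of_nonneg_left (by linarith [ht.2]) (by positivity))
  have h3 := h1 t ht
  have e : (x₀ + α * (∫ τ in a..t, f τ (x τ)) + (1 - α) * (f t (x t) - f a x₀)) -
     (x₀ + α * (∫ τ in a..t, f τ (y τ)) + (1 - α) * (f t (y t) - f a x₀)) =
     α * ((∫ τ in a..t, f τ (x τ)) - ∫ τ in a..t, f τ (y τ)) +
      (1 - α) * (f t (x t) - f t (y t)) := by ring
  rw [e]
  refine (abs_add_le _ _).trans ?_
  rw [abs_mul, abs_mul, abs_of_pos hα.1, abs_of_pos (sub_pos.2 hα.2)]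
  have := mul_le_mul_of_nonneg_left h2 hα.1.le
  have := mul_le_mul_of_nonneg_left h3 (sub_pos.2 hα.2).le
  linarith

/-- Existence and uniqueness for the nonlinear Caputo–Fabrizio initial value problem on
`𝕋 = ℝ`: if `f` is continuous on `[a,b] × ℝ`, Lipschitz in the second variable with
constant `L`, and `((1-α) + α(b-a)) L < 1`, then there is a continuous function
`x : [a,b] → ℝ` satisfying the fixed-point equation
`x(t) = x₀ + α ∫_a^t f(τ, x(τ)) dτ + (1-α)(f(t, x(t)) - f(a, x₀))`,
and it is unique on `[a,b]`. -/
theorem cf_nonlinear_exists_unique (α a b L x₀ : ℝ) (hα : α ∈ Set.Ioo (0 : ℝ) 1)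
    (hab : a < b) (hL : 0 < L)
    (f : ℝ → ℝ → ℝ)
    (hf : ContinuousOn (fun p : ℝ × ℝ => f p.1 p.2) (Set.Icc a b ×ˢ Set.univ))
    (hlip : ∀ t ∈ Set.Icc a b, ∀ x₁ x₂ : ℝ, |f t x₁ - f t x₂| ≤ L * |x₁ - x₂|)
    (hsmall : ((1 - α) + α * (b - a)) * L < 1) :
    (∃ x : ℝ → ℝ, ContinuousOn x (Set.Icc a b) ∧
      ∀ t ∈ Set.Icc a b,
        x t = x₀ + α * (∫ τ in a..t, f τ (x τ)) + (1 - α) * (f t (x t) - f a x₀))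
    ∧
    (∀ x y : ℝ → ℝ,
      ContinuousOn x (Set.Icc a b) → ContinuousOn y (Set.Icc a b) →
      (∀ t ∈ Set.Icc a b,
        x t = x₀ + α * (∫ τ in a..t, f τ (x τ)) + (1 - α) * (f t (x t) - f a x₀)) →
      (∀ t ∈ Set.Icc a b,
        y t = x₀ + α * (∫ τ in a..t, f τ (y τ)) + (1 - α) * (f t (y t) - f a x₀)) →
      ∀ t ∈ Set.Icc a b, x t = y t) := by
  have hk0 : 0 ≤ ((1 - α) + α * (b - a)) * L := by
    have := mul_pos hα.1 (sub_pos.2 hab)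
    have := hα.2
    apply mul_nonneg _ hL.le
    linarith
  constructor
  · have hcont : ∀ u : ℝ → ℝ, ContinuousOn u (Icc a b) → ContinuousOn
        (fun t => x₀ + α * (∫ τ in a..t, f τ (u τ)) + (1 - α) * (f t (u t) - f a x₀))
        (Icc a b) := by
      intro u hu
      have hc := cf_comp_cont hf hu
      have hi : ContinuousOn (fun t => ∫ τ in a..t, f τ (u τ)) (Icc a b) := by
        have := intervalIntegral.continuousOn_primitive_interval (μ := volume) (a := a) (b := b)
          (f := fun τ => f τ (u τ)) (by
            rw [uIcc_of_le hab.le]; exact hc.integrableOn_Icc)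
        rwa [uIcc_of_le hab.le] at this
      exact (continuousOn_const.add (continuousOn_const.mul hi)).add
        (continuousOn_const.mul (hc.sub continuousOn_const))
    have hext : ∀ u : C(Icc a b, ℝ), ContinuousOn (IccExtend hab.le u) (Icc a b) :=
      fun u => (u.continuous.Icc_extend').continuousOn
    let T : C(Icc a b, ℝ) → C(Icc a b, ℝ) := fun u =>
      ⟨_, (hcont _ (hext u)).domRestrict⟩
    have hT : ContractingWith (Real.toNNReal (((1 - α) + α * (b - a)) * L)) T := by
      refine ⟨by rwa [Real.toNNReal_lt_one], LipschitzWith.of_dist_le_mul ?_⟩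
      intro u v
      rw [Real.coe_toNNReal _ hk0, ContinuousMap.dist_le (mul_nonneg hk0 dist_nonneg)]
      intro t
      refine cf_est hα hL hf hlip (hext u) (hext v) ?_ t.2
      intro s hs
      rw [IccExtend_of_mem _ _ hs, IccExtend_of_mem _ _ hs]
      exact ContinuousMap.dist_apply_le_dist (f := u) (g := v) _
    let z : C(Icc a b, ℝ) := ContractingWith.fixedPoint T hT
    have hz : T z = z := hT.fixedPoint_isFixedPt
    refine ⟨IccExtend hab.le z, hext _, fun t ht => ?_⟩
    have h := DFunLike.congr_fun hz ⟨t, ht⟩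
    conv_lhs => rw [IccExtend_of_mem _ _ ht]
    exact h.symm
  · intro x y hx hy ex ey t ht
    obtain ⟨m, hm, hmax⟩ := isCompact_Icc.exists_isMaxOn (nonempty_Icc.2 hab.le) (hx.sub hy).abs
    have hD : ∀ s ∈ Icc a b, |x s - y s| ≤ |x m - y m| := fun s hs => hmax hs
    have h := cf_est (x₀ := x₀) hα hL hf hlip hx hy hD hm
    rw [← ex m hm, ← ey m hm] at h
    have h0 : |x m - y m| ≤ 0 := by
      by_contra hc
      push Not at hc
      nlinarith
    exact sub_eq_zero.1 (abs_nonpos_iff.1 ((hD t ht).trans h0))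
end

section
/- Let α ∈ (0,1), a < b be real numbers, x₀ ∈ ℝ, and let f : [a,b] × ℝ → ℝ be continuous and satisfy |f(t, x₁) − f(t, x₂)| ≤ L·|x₁ − x₂| for all t ∈ [a,b] and x₁, x₂ ∈ ℝ, where L > 0. Define the operator 𝒩 on continuous functions x : [a,b] → ℝ by (𝒩x)(t) = x₀ + α·∫_a^t f(τ, x(τ)) dτ + (1−α)·(f(t, x(t)) − f(a, x₀)). Then for all continuous x₁, x₂ : [a,b] → ℝ, sup_{t ∈ [a,b]} |(𝒩x₁)(t) − (𝒩x₂)(t)| ≤ ((1−α) + α·(b−a))·L · sup_{t ∈ [a,b]} |x₁(t) − x₂(t)|. -/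
open MeasureTheory intervalIntegral Set

/-- Contraction estimate for the Caputo–Fabrizio fixed-point operator
`(𝒩x)(t) = x₀ + α ∫_a^t f(τ, x(τ)) dτ + (1-α)(f(t, x(t)) - f(a, x₀))` on `C([a,b])`:
`sup_{t ∈ [a,b]} |(𝒩x₁)(t) - (𝒩x₂)(t)| ≤ ((1-α) + α(b-a)) L · sup_{t ∈ [a,b]} |x₁(t) - x₂(t)|`. -/
theorem cf_operator_contraction (α a b L x₀ : ℝ) (hα : α ∈ Set.Ioo (0 : ℝ) 1)
    (hab : a < b) (hL : 0 < L)
    (f : ℝ → ℝ → ℝ)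
    (hf : ContinuousOn (fun p : ℝ × ℝ => f p.1 p.2) (Set.Icc a b ×ˢ Set.univ))
    (hlip : ∀ t ∈ Set.Icc a b, ∀ y₁ y₂ : ℝ, |f t y₁ - f t y₂| ≤ L * |y₁ - y₂|)
    (N : (ℝ → ℝ) → ℝ → ℝ)
    (hN : ∀ x : ℝ → ℝ, ∀ t : ℝ,
      N x t = x₀ + α * (∫ τ in a..t, f τ (x τ)) + (1 - α) * (f t (x t) - f a x₀))
    (x₁ x₂ : ℝ → ℝ)
    (hx₁ : ContinuousOn x₁ (Set.Icc a b)) (hx₂ : ContinuousOn x₂ (Set.Icc a b)) :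
    (⨆ t : Set.Icc a b, |N x₁ t - N x₂ t|)
      ≤ ((1 - α) + α * (b - a)) * L * ⨆ t : Set.Icc a b, |x₁ t - x₂ t| := by
  obtain ⟨h0, h1⟩ := hα
  have hne : Nonempty (Set.Icc a b) := ⟨⟨a, le_refl a, hab.le⟩⟩
  have hbdd : BddAbove (Set.range fun t : Set.Icc a b => |x₁ t - x₂ t|) := by
    have h := (isCompact_Icc (a := a) (b := b)).bddAbove_image (hx₁.sub hx₂).abs
    rw [Set.image_eq_range] at h
    exact h
  set S : ℝ := ⨆ t : Set.Icc a b, |x₁ t - x₂ t| with hS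
  have hle : ∀ t ∈ Set.Icc a b, |x₁ t - x₂ t| ≤ S := fun t ht =>
    le_ciSup hbdd (⟨t, ht⟩ : Set.Icc a b)
  have hS0 : 0 ≤ S := (abs_nonneg _).trans (hle a ⟨le_refl a, hab.le⟩)
  have hfle : ∀ t ∈ Set.Icc a b, |f t (x₁ t) - f t (x₂ t)| ≤ L * S := fun t ht =>
    (hlip t ht _ _).trans (mul_le_mul_of_nonneg_left (hle t ht) hL.le)
  have hcont : ∀ x : ℝ → ℝ, ContinuousOn x (Set.Icc a b) →
      ContinuousOn (fun τ => f τ (x τ)) (Set.Icc a b) := fun x hx =>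
    hf.comp (continuousOn_id.prodMk hx) (fun τ hτ => ⟨hτ, Set.mem_univ _⟩)
  apply ciSup_le
  rintro ⟨t, ht⟩
  have hint : ∀ x : ℝ → ℝ, ContinuousOn x (Set.Icc a b) →
      IntervalIntegrable (fun τ => f τ (x τ)) volume a t := fun x hx =>
    ((hcont x hx).mono (Set.Icc_subset_Icc_right ht.2)).intervalIntegrable_of_Icc ht.1
  have hI : |∫ τ in a..t, (f τ (x₁ τ) - f τ (x₂ τ))| ≤ L * S * (b - a) := by
    have h := intervalIntegral.norm_integral_le_of_norm_le_const (a := a) (b := t) (C := L * S)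
      (f := fun τ => f τ (x₁ τ) - f τ (x₂ τ)) (by
        intro τ hτ
        rw [Set.uIoc_of_le ht.1] at hτ
        exact hfle τ ⟨hτ.1.le, hτ.2.trans ht.2⟩)
    rw [Real.norm_eq_abs, abs_of_nonneg (sub_nonneg.2 ht.1)] at h
    refine h.trans (mul_le_mul_of_nonneg_left ?_ (mul_nonneg hL.le hS0))
    linarith [ht.2]
  have hEq : N x₁ t - N x₂ t = α * (∫ τ in a..t, (f τ (x₁ τ) - f τ (x₂ τ)))
      + (1 - α) * (f t (x₁ t) - f t (x₂ t)) := by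
    rw [intervalIntegral.integral_sub (hint x₁ hx₁) (hint x₂ hx₂), hN, hN]
    ring
  show |N x₁ t - N x₂ t| ≤ _
  rw [hEq]
  refine (abs_add_le _ _).trans ?_
  rw [abs_mul, abs_mul, abs_of_pos h0, abs_of_pos (sub_pos.2 h1)]
  have e1 := mul_le_mul_of_nonneg_left hI h0.le
  have e2 := mul_le_mul_of_nonneg_left (hfle t ht) (sub_pos.2 h1).le
  linarith
end

section
/- Let α ∈ (0,1), let a < b be integers, x₀ ∈ ℝ, and let f : ℤ × ℝ → ℝ satisfy |f(t, x₁) − f(t, x₂)| ≤ L·|x₁ − x₂| for all integers t ∈ [a,b] and all x₁, x₂ ∈ ℝ, where L > 0. If ((1−α) + α·(b−a))·L < 1, then there exists a unique function x : {a, a+1, …, b} → ℝ satisfying x(t) = x₀ + α·Σ_{τ=a}^{t−1} f(τ, x(τ)) + (1−α)·(f(t, x(t)) − f(a, x₀)) for all t ∈ {a, a+1, …, b}. -/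
open Finset

/-- Existence and uniqueness for the nonlinear Caputo–Fabrizio initial value problem on
the time scale `𝕋 = ℤ`: if `f` is Lipschitz in the second variable with constant `L` on
`[a,b] × ℝ` and `((1-α) + α(b-a)) L < 1`, then there is a function `x` on the integer
interval `{a, …, b}` satisfying the fixed-point equation
`x(t) = x₀ + α Σ_{τ=a}^{t-1} f(τ, x(τ)) + (1-α)(f(t, x(t)) - f(a, x₀))`,
and it is unique on `{a, …, b}`. -/
theorem cf_nonlinear_exists_unique_Z (α L x₀ : ℝ) (a b : ℤ) (hα : α ∈ Set.Ioo (0 : ℝ) 1)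
    (hab : a < b) (hL : 0 < L)
    (f : ℤ → ℝ → ℝ)
    (hlip : ∀ t ∈ Set.Icc a b, ∀ x₁ x₂ : ℝ, |f t x₁ - f t x₂| ≤ L * |x₁ - x₂|)
    (hsmall : ((1 - α) + α * ((b : ℝ) - (a : ℝ))) * L < 1) :
    (∃ x : ℤ → ℝ,
      ∀ t ∈ Set.Icc a b,
        x t = x₀ + α * (∑ τ ∈ Finset.Ico a t, f τ (x τ)) + (1 - α) * (f t (x t) - f a x₀))
    ∧
    (∀ x y : ℤ → ℝ,
      (∀ t ∈ Set.Icc a b,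
        x t = x₀ + α * (∑ τ ∈ Finset.Ico a t, f τ (x τ)) + (1 - α) * (f t (x t) - f a x₀)) →
      (∀ t ∈ Set.Icc a b,
        y t = x₀ + α * (∑ τ ∈ Finset.Ico a t, f τ (y τ)) + (1 - α) * (f t (y t) - f a x₀)) →
      ∀ t ∈ Set.Icc a b, x t = y t) := by
  obtain ⟨h0, h1⟩ := hα
  have hba : (0 : ℝ) < (b : ℝ) - a := by
    have : (a : ℝ) < b := by exact_mod_cast hab
    linarith
  have hq : (1 - α) * L < 1 := by
    have : 0 < α * ((b : ℝ) - a) * L := by positivity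
    nlinarith
  have hq0 : 0 ≤ (1 - α) * L := mul_nonneg (by linarith) hL.le
  have hfix : ∀ t ∈ Set.Icc a b, ∀ c : ℝ, ∃ u : ℝ, u = c + (1 - α) * (f t u - f a x₀) := by
    intro t ht c
    have hc : ContractingWith (⟨(1 - α) * L, hq0⟩ : NNReal)
        (fun u : ℝ => c + (1 - α) * (f t u - f a x₀)) := by
      refine ⟨?_, ?_⟩
      · exact_mod_cast hq
      · apply LipschitzWith.of_dist_le_mul
        intro u v
        rw [Real.dist_eq, Real.dist_eq]
        have e : c + (1 - α) * (f t u - f a x₀) - (c + (1 - α) * (f t v - f a x₀))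
            = (1 - α) * (f t u - f t v) := by ring
        rw [e, abs_mul, abs_of_pos (by linarith : 0 < 1 - α)]
        have := mul_le_mul_of_nonneg_left (hlip t ht u v) (by linarith : 0 ≤ 1 - α)
        rw [← mul_assoc] at this
        exact this
    exact ⟨_, (hc.fixedPoint_isFixedPt).symm⟩
  constructor
  · have key : ∀ n : ℕ, ∃ x : ℤ → ℝ, ∀ t, a ≤ t → t < a + n → t ≤ b →
        x t = x₀ + α * (∑ τ ∈ Finset.Ico a t, f τ (x τ)) + (1 - α) * (f t (x t) - f a x₀) := by
      intro n
      induction n with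
      | zero => exact ⟨fun _ => 0, fun t h1 h2 => by simp at h2; omega⟩
      | succ n ih =>
        obtain ⟨x, hx⟩ := ih
        by_cases hn : a + n ≤ b
        · obtain ⟨u, hu⟩ := hfix (a + n) ⟨by omega, hn⟩
            (x₀ + α * (∑ τ ∈ Finset.Ico a (a + n), f τ (x τ)))
          refine ⟨Function.update x (a + n) u, fun t h1 h2 h3 => ?_⟩
          push_cast at h2
          have hs : ∑ τ ∈ Finset.Ico a t, f τ (Function.update x (a + n) u τ)
              = ∑ τ ∈ Finset.Ico a t, f τ (x τ) := by
            apply Finset.sum_congr rfl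
            intro τ hτ
            rw [Finset.mem_Ico] at hτ
            rw [Function.update_of_ne (by omega)]
          rw [hs]
          by_cases ht : t = a + n
          · subst ht
            rw [Function.update_self]
            exact hu
          · rw [Function.update_of_ne ht]
            exact hx t h1 (by omega) h3
        · exact ⟨x, fun t h1 h2 h3 => hx t h1 (by omega) h3⟩
    obtain ⟨x, hx⟩ := key ((b - a).toNat + 1)
    exact ⟨x, fun t ht => hx t ht.1 (by have := ht.2; push_cast; omega) ht.2⟩
  · intro x y hx hy
    have key : ∀ n : ℕ, ∀ t, a ≤ t → t < a + n → t ≤ b → x t = y t := by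
      intro n
      induction n with
      | zero => intro t h1 h2; simp at h2; omega
      | succ n ih =>
        intro t h1' h2 h3
        push_cast at h2
        have hs : ∑ τ ∈ Finset.Ico a t, f τ (x τ) = ∑ τ ∈ Finset.Ico a t, f τ (y τ) := by
          apply Finset.sum_congr rfl
          intro τ hτ
          rw [Finset.mem_Ico] at hτ
          rw [ih τ hτ.1 (by omega) (by omega)]
        have ex := hx t ⟨h1', h3⟩
        have ey := hy t ⟨h1', h3⟩
        rw [hs] at ex
        have e : x t - y t = (1 - α) * (f t (x t) - f t (y t)) := by linarith
        have e2 : |x t - y t| = (1 - α) * |f t (x t) - f t (y t)| := by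
          conv_lhs => rw [e]
          rw [abs_mul, abs_of_pos (by linarith : 0 < 1 - α)]
        have h := mul_le_mul_of_nonneg_left (hlip t ⟨h1', h3⟩ (x t) (y t))
          (by linarith : 0 ≤ 1 - α)
        have h4 : |x t - y t| = 0 := by
          by_contra hne
          have hp : 0 < |x t - y t| := lt_of_le_of_ne (abs_nonneg _) (Ne.symm hne)
          have := mul_lt_mul_of_pos_right hq hp
          linarith
        linarith [abs_eq_zero.mp h4]
    intro t ht
    exact key ((b - a).toNat + 1) t ht.1 (by have := ht.2; push_cast; omega) ht.2
end
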